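/- Convergence of the VI implies convergence of the RVI: with J_0 = V_0 continuous and strictly positive, J_n generated by the VI with constant Λ > 0 and V_n by the RVI with reference point x_0, if J_n converges pointwise on S to a function J_∞ with J_∞(x_0) > 0, then V_n converges pointwise on S to the function x ↦ Λ · J_∞(x) / J_∞(x_0). -/

import Mathlib

open MeasureTheory Filter Topology

theorem op_cont_pos {S U : Type*} [MetricSpace S] [CompactSpace S] [MeasurableSpace S]
    [BorelSpace S] [MetricSpace U] [CompactSpace U] [Nonempty U]
    (γ : Measure S) [IsFiniteMeasure γ]
    (φ : S → U → S → ℝ)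
    (hφc : Continuous fun q : S × U × S => φ q.1 q.2.1 q.2.2)
    (hφpos : ∀ x u y, 0 < φ x u y)
    (p : S → U → Measure S)
    (hp : ∀ x u, p x u = γ.withDensity fun y => ENNReal.ofReal (φ x u y))
    (hprob : ∀ x u, IsProbabilityMeasure (p x u))
    (k : S → U → ℝ) (hk : Continuous fun q : S × U => k q.1 q.2)
    (f : S → ℝ) (hf : Continuous f) (hfpos : ∀ x, 0 < f x) :
    Continuous (fun x => ⨅ u : U, Real.exp (k x u) * ∫ y, f y ∂(p x u)) ∧
    ∀ x, 0 < ⨅ u : U, Real.exp (k x u) * ∫ y, f y ∂(p x u) := by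
  have hint : ∀ x u, ∫ y, f y ∂(p x u) = ∫ y, φ x u y * f y ∂γ := by
    intro x u
    have hc : Continuous fun y => φ x u y :=
      hφc.comp (by fun_prop : Continuous fun y : S => ((x, u, y) : S × U × S))
    rw [hp, integral_withDensity_eq_integral_toReal_smul]
    · refine integral_congr_ae (Eventually.of_forall fun y => ?_)
      simp [ENNReal.toReal_ofReal (hφpos x u y).le]
    · exact hc.measurable.ennreal_ofReal
    · exact Eventually.of_forall fun y => ENNReal.ofReal_lt_top
  have hF : Continuous fun q : S × U => Real.exp (k q.1 q.2) * ∫ y, f y ∂(p q.1 q.2) := by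
    refine (Real.continuous_exp.comp hk).mul ?_
    simp only [hint]
    have h1 : Continuous (Function.uncurry fun (q : S × U) (y : S) => φ q.1 q.2 y * f y) := by
      refine Continuous.mul ?_ (hf.comp continuous_snd)
      exact hφc.comp (by fun_prop :
        Continuous fun z : (S × U) × S => ((z.1.1, z.1.2, z.2) : S × U × S))
    have := continuous_parametric_integral_of_continuous (μ := γ) h1 (isCompact_univ (X := S))
    simpa using this
  have hFpos : ∀ x u, 0 < Real.exp (k x u) * ∫ y, f y ∂(p x u) := by
    intro x u
    refine mul_pos (Real.exp_pos _) ?_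
    haveI := hprob x u
    obtain ⟨m, -, hm⟩ := isCompact_univ.exists_isMinOn ⟨x, Set.mem_univ x⟩ hf.continuousOn
    have hi : Integrable f (p x u) :=
      hf.integrable_of_hasCompactSupport (HasCompactSupport.of_compactSpace f)
    have h2 : ∫ y, f m ∂(p x u) ≤ ∫ y, f y ∂(p x u) :=
      integral_mono (integrable_const _) hi fun y => hm (Set.mem_univ y)
    have := hfpos m
    simp at h2
    linarith
  constructor
  · have h3 := IsCompact.continuous_sInf (isCompact_univ (X := U)) (f := fun x u => Real.exp (k x u) * ∫ y, f y ∂(p x u)) hF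
    simpa [Set.image_univ, sInf_range] using h3
  · intro x
    have hx : Continuous fun u => Real.exp (k x u) * ∫ y, f y ∂(p x u) :=
      hF.comp (by fun_prop : Continuous fun u : U => ((x, u) : S × U))
    obtain ⟨m, -, hm⟩ := isCompact_univ.exists_isMinOn Set.univ_nonempty hx.continuousOn
    exact (hFpos x m).trans_le (le_ciInf fun u => hm (Set.mem_univ u))

/-- **Convergence of the VI implies convergence of the RVI:**
if `J n` converges pointwise to `J∞` with `J∞ x₀ > 0`, then `V n` converges
pointwise to `x ↦ Λ * J∞ x / J∞ x₀`. -/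
theorem rvi_converges_of_vi_converges
    {S U : Type*} [MetricSpace S] [CompactSpace S] [MeasurableSpace S] [BorelSpace S]
    [MetricSpace U] [CompactSpace U] [Nonempty U]
    (γ : Measure S) [IsFiniteMeasure γ]
    (hγ : ∀ O : Set S, IsOpen O → O.Nonempty → 0 < γ O)
    (φ : S → U → S → ℝ)
    (hφc : Continuous fun q : S × U × S => φ q.1 q.2.1 q.2.2)
    (hφpos : ∀ x u y, 0 < φ x u y)
    (p : S → U → Measure S)
    (hp : ∀ x u, p x u = γ.withDensity fun y => ENNReal.ofReal (φ x u y))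
    (hprob : ∀ x u, IsProbabilityMeasure (p x u))
    (k : S → U → ℝ) (hk : Continuous fun q : S × U => k q.1 q.2)
    (Λ : ℝ) (hΛ : 0 < Λ) (x₀ : S)
    (J V : ℕ → S → ℝ)
    (hJ0c : Continuous (J 0)) (hJ0pos : ∀ x, 0 < J 0 x) (hJV0 : J 0 = V 0)
    (hJ : ∀ n x, J (n + 1) x = Λ⁻¹ * ⨅ u : U, Real.exp (k x u) * ∫ y, J n y ∂(p x u))
    (hV : ∀ n x, V (n + 1) x
        = (V n x₀)⁻¹ * ⨅ u : U, Real.exp (k x u) * ∫ y, V n y ∂(p x u))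
    (Jlim : S → ℝ)
    (hJlim : ∀ x : S, Filter.Tendsto (fun n => J n x) Filter.atTop (nhds (Jlim x)))
    (hJlimpos : 0 < Jlim x₀) :
    ∀ x : S, Filter.Tendsto (fun n => V n x) Filter.atTop
      (nhds (Λ * Jlim x / Jlim x₀)) := by
  have hJcp : ∀ n, Continuous (J n) ∧ ∀ x, 0 < J n x := by
    intro n
    induction n with
    | zero => exact ⟨hJ0c, hJ0pos⟩
    | succ n ih =>
      obtain ⟨h1, h2⟩ := op_cont_pos γ φ hφc hφpos p hp hprob k hk (J n) ih.1 ih.2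
      rw [show J (n + 1) = _ from funext (hJ n)]
      exact ⟨continuous_const.mul h1, fun x => mul_pos (inv_pos.2 hΛ) (h2 x)⟩
  have hstep : ∀ n (c : ℝ), 0 < c → (∀ x, V n x = c * J n x) →
      ∀ x, V (n + 1) x = Λ / J n x₀ * J (n + 1) x := by
    intro n c hc h x
    have hpos := (hJcp n).2 x₀
    have e : (⨅ u : U, Real.exp (k x u) * ∫ y, V n y ∂(p x u))
        = c * ⨅ u : U, Real.exp (k x u) * ∫ y, J n y ∂(p x u) := by
      rw [Real.mul_iInf_of_nonneg hc.le]
      congr 1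
      funext u
      simp only [h]
      rw [integral_const_mul]
      ring
    rw [hV, hJ, e, h]
    field_simp
  have hc : ∀ n, ∃ c : ℝ, 0 < c ∧ ∀ x, V n x = c * J n x := by
    intro n
    induction n with
    | zero => exact ⟨1, one_pos, fun x => by rw [hJV0, one_mul]⟩
    | succ n ih =>
      obtain ⟨c, hc, h⟩ := ih
      exact ⟨Λ / J n x₀, div_pos hΛ ((hJcp n).2 x₀), hstep n c hc h⟩
  intro x
  rw [← tendsto_add_atTop_iff_nat 1]
  have e : (fun n => V (n + 1) x) = fun n => Λ * J (n + 1) x / J n x₀ := by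
    funext n
    obtain ⟨c, hc, h⟩ := hc n
    rw [hstep n c hc h x]
    ring
  rw [e]
  exact (((tendsto_add_atTop_iff_nat 1).2 (hJlim x)).const_mul Λ).div (hJlim x₀) hJlimpos.ne'
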